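/- arXiv:2605.04038 — 7 statements merged into one kernel-verified Lean document; each statement's English description precedes it below -/
import Mathlib

section
/- Let S be a set and let u, d : 𝒫(S) → 𝒫(S) be functions that preserve arbitrary unions. Then the pair (u, d) is parallel if and only if for all x, y ∈ S: x ∈ d({y}) ⇔ y ∈ u({x}). -/
/-- A pair of functions on a meet-semilattice is *parallel* if
`u x ⊓ y ≤ u (x ⊓ d y)` and `x ⊓ d y ≤ d (u x ⊓ y)` for all `x, y`. -/
def IsParallel {L : Type*} [SemilatticeInf L] (u d : L → L) : Prop :=
  ∀ x y : L, u x ⊓ y ≤ u (x ⊓ d y) ∧ x ⊓ d y ≤ d (u x ⊓ y)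

theorem mem_union_pres {S : Type*} (f : Set S → Set S)
    (hf : ∀ 𝒮 : Set (Set S), f (⋃₀ 𝒮) = ⋃ A ∈ 𝒮, f A) (X : Set S) (a : S) :
    a ∈ f X ↔ ∃ x ∈ X, a ∈ f {x} := by
  have h := hf ((fun x => ({x} : Set S)) '' X)
  have e : ⋃₀ ((fun x => ({x} : Set S)) '' X) = X := by
    ext z; simp
  rw [e] at h
  rw [h]; simp

/-- For union-preserving set operators, being parallel is equivalent to the
singleton correspondence `x ∈ d {y} ↔ y ∈ u {x}`. -/
theorem parallel_iff_singleton {S : Type*} (u d : Set S → Set S)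
    (hu : ∀ 𝒮 : Set (Set S), u (⋃₀ 𝒮) = ⋃ A ∈ 𝒮, u A)
    (hd : ∀ 𝒮 : Set (Set S), d (⋃₀ 𝒮) = ⋃ A ∈ 𝒮, d A) :
    IsParallel u d ↔ ∀ x y : S, x ∈ d {y} ↔ y ∈ u {x} := by
  have mu := mem_union_pres u hu
  have md := mem_union_pres d hd
  constructor
  · intro h x y
    constructor
    · intro hx
      have := (h {x} {y}).2 ⟨rfl, hx⟩
      obtain ⟨z, ⟨hz, hzy⟩, _⟩ := (md _ _).1 this
      rw [Set.mem_singleton_iff] at hzy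
      exact hzy ▸ hz
    · intro hy
      have := (h {x} {y}).1 ⟨hy, rfl⟩
      obtain ⟨z, ⟨hzx, hz⟩, _⟩ := (mu _ _).1 this
      rw [Set.mem_singleton_iff] at hzx
      exact hzx ▸ hz
  · intro h X Y
    constructor
    · rintro b ⟨hb, hbY⟩
      obtain ⟨x, hx, hbx⟩ := (mu _ _).1 hb
      exact (mu _ _).2 ⟨x, ⟨hx, (md _ _).2 ⟨b, hbY, (h _ _).2 hbx⟩⟩, hbx⟩
    · rintro a ⟨ha, hd'⟩
      obtain ⟨y, hy, hay⟩ := (md _ _).1 hd'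
      exact (md _ _).2 ⟨y, ⟨(mu _ _).2 ⟨a, ha, (h _ _).1 hay⟩, hy⟩, hay⟩
end

section
/- Let S be a set and let u, d : 𝒫(S) → 𝒫(S) be a parallel pair of functions preserving arbitrary unions. Then there exists a unique relation R on S whose induced cones satisfy up_R = u and down_R = d (so relations on S correspond bijectively to union-preserving parallel pairs on 𝒫(S)). -/
/-- The up cone of a relation: `upCone R A = {x | ∃ a ∈ A, a R x}`. -/
def upCone {S : Type*} (R : S → S → Prop) (A : Set S) : Set S := {x | ∃ a ∈ A, R a x}

/-- The down cone of a relation: `downCone R A = {x | ∃ a ∈ A, x R a}`. -/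
def downCone {S : Type*} (R : S → S → Prop) (A : Set S) : Set S := {x | ∃ a ∈ A, R x a}

theorem parallel_aux_mem {S : Type*} (u : Set S → Set S)
    (hu : ∀ 𝒮 : Set (Set S), u (⋃₀ 𝒮) = ⋃ A ∈ 𝒮, u A) (A : Set S) (x : S) :
    x ∈ u A ↔ ∃ a ∈ A, x ∈ u {a} := by
  have h := hu ((fun a => ({a} : Set S)) '' A)
  have e : ⋃₀ ((fun a => ({a} : Set S)) '' A) = A := by
    ext y
    simp
  rw [e] at h
  rw [h]
  simp

/-- A union-preserving parallel pair on a powerset comes from a unique relation. -/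
theorem exists_unique_relation_of_parallel {S : Type*} (u d : Set S → Set S)
    (hu : ∀ 𝒮 : Set (Set S), u (⋃₀ 𝒮) = ⋃ A ∈ 𝒮, u A)
    (hd : ∀ 𝒮 : Set (Set S), d (⋃₀ 𝒮) = ⋃ A ∈ 𝒮, d A)
    (hpar : IsParallel u d) :
    ∃! R : S → S → Prop, upCone R = u ∧ downCone R = d := by
  have key : ∀ a x, x ∈ u {a} ↔ a ∈ d {x} := by
    intro a x
    constructor
    · intro h
      have h1 := (hpar {a} {x}).1 ⟨h, rfl⟩
      obtain ⟨b, ⟨hb, hb'⟩, _⟩ := (parallel_aux_mem u hu _ _).1 h1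
      rw [Set.mem_singleton_iff] at hb
      exact hb ▸ hb'
    · intro h
      have h1 := (hpar {a} {x}).2 ⟨rfl, h⟩
      obtain ⟨b, ⟨hb, hb'⟩, _⟩ := (parallel_aux_mem d hd _ _).1 h1
      rw [Set.mem_singleton_iff] at hb'
      exact hb' ▸ hb
  refine ⟨fun a x => x ∈ u {a}, ⟨?_, ?_⟩, ?_⟩
  · funext A
    ext x
    exact (parallel_aux_mem u hu A x).symm
  · funext A
    ext x
    rw [parallel_aux_mem d hd A x]
    simp only [downCone, Set.mem_setOf_eq, key]
  · rintro R ⟨rfl, -⟩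
    funext a x
    simp [upCone]
end

section
/- Let L be a frame and u, d : L → L monotone parallel cones. If a, b, c, e ∈ L satisfy u(a) ⊓ b = u(c) ⊓ e and a ⊓ d(b) = c ⊓ d(e), then for all x, y ∈ L: u(a ⊓ x) ⊓ (b ⊓ y) = u(c ⊓ x) ⊓ (e ⊓ y) and (a ⊓ x) ⊓ d(b ⊓ y) = (c ⊓ x) ⊓ d(e ⊓ y). (Hence the relation identifying rectangles with equal reduced cones is a meet-semilattice congruence.) -/
theorem sim_aux {L : Type*} [Order.Frame L] (u d : L → L)
    (hum : Monotone u) (hdm : Monotone d) (hpar : IsParallel u d)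
    (a b c e : L) (h₁ : u a ⊓ b ≤ u c ⊓ e) (h₂ : a ⊓ d b ≤ c ⊓ d e) (x y : L) :
      u (a ⊓ x) ⊓ (b ⊓ y) ≤ u (c ⊓ x) ⊓ (e ⊓ y) ∧
      (a ⊓ x) ⊓ d (b ⊓ y) ≤ (c ⊓ x) ⊓ d (e ⊓ y) := by
  have hc : a ⊓ d b ≤ c := h₂.trans inf_le_left
  have he : u a ⊓ b ≤ e := h₁.trans inf_le_right
  refine ⟨le_inf ?_ (le_inf ?_ ?_), le_inf (le_inf ?_ ?_) ?_⟩
  · refine (inf_le_inf_left _ inf_le_left).trans (((hpar (a ⊓ x) b).1).trans (hum ?_))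
    exact le_inf ((inf_le_inf_right _ inf_le_left).trans hc) (inf_le_left.trans inf_le_right)
  · exact (inf_le_inf (hum inf_le_left) inf_le_left).trans he
  · exact inf_le_right.trans inf_le_right
  · exact (inf_le_inf inf_le_left (hdm inf_le_left)).trans hc
  · exact inf_le_left.trans inf_le_right
  · refine (inf_le_inf_right _ inf_le_left).trans (((hpar a (b ⊓ y)).2).trans (hdm ?_))
    exact le_inf ((inf_le_inf_left _ inf_le_left).trans he) (inf_le_right.trans inf_le_right)

/-- The relation identifying rectangles with equal reduced cones is a
meet-semilattice congruence (for monotone parallel cones on a frame). -/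
theorem sim_meet_congruence {L : Type*} [Order.Frame L] (u d : L → L)
    (hum : Monotone u) (hdm : Monotone d) (hpar : IsParallel u d)
    (a b c e : L) (h₁ : u a ⊓ b = u c ⊓ e) (h₂ : a ⊓ d b = c ⊓ d e) :
    ∀ x y : L,
      u (a ⊓ x) ⊓ (b ⊓ y) = u (c ⊓ x) ⊓ (e ⊓ y) ∧
      (a ⊓ x) ⊓ d (b ⊓ y) = (c ⊓ x) ⊓ d (e ⊓ y) := by
  intro x y
  have p := sim_aux u d hum hdm hpar a b c e h₁.le h₂.le x y
  have q := sim_aux u d hum hdm hpar c e a b h₁.ge h₂.ge x y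
  exact ⟨le_antisymm p.1 q.1, le_antisymm p.2 q.2⟩
end

section
/- Let (L, u, d) and (M, u', d') be conic frames (frames equipped with join-preserving parallel pairs of cones) and let h : L → M be a frame homomorphism. Then h satisfies u' ∘ h ≤ h ∘ u and d' ∘ h ≤ h ∘ d (i.e. h is a conic morphism) if and only if for all a, b, c, e ∈ L: if u(a) ⊓ b = u(c) ⊓ e and a ⊓ d(b) = c ⊓ d(e), then u'(h a) ⊓ h b = u'(h c) ⊓ h e and h a ⊓ d'(h b) = h c ⊓ d'(h e). -/
/-- A function on a frame preserves arbitrary joins. -/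
def PreservesJoins {L : Type*} [Order.Frame L] (f : L → L) : Prop :=
  ∀ A : Set L, f (sSup A) = sSup (f '' A)

theorem PreservesJoins.mono' {L : Type*} [Order.Frame L] {f : L → L}
    (hf : PreservesJoins f) : Monotone f := by
  intro a b hab
  have h1 := hf {a, b}
  rw [Set.image_pair, sSup_pair, sSup_pair, sup_eq_right.2 hab] at h1
  rw [h1]
  exact le_sup_left

theorem conic_aux {L M : Type*} [Order.Frame L] [Order.Frame M]
    (u d : L → L) (u' d' : M → M)
    (hu' : Monotone u') (hd' : Monotone d') (hpar' : IsParallel u' d')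
    (h : FrameHom L M)
    (h1 : ∀ x : L, u' (h x) ≤ h (u x)) (h2 : ∀ x : L, d' (h x) ≤ h (d x))
    (a b c e : L) (e1 : u a ⊓ b = u c ⊓ e) (e2 : a ⊓ d b = c ⊓ d e) :
    u' (h a) ⊓ h b ≤ u' (h c) ⊓ h e ∧ h a ⊓ d' (h b) ≤ h c ⊓ d' (h e) := by
  have k1 : u' (h a) ⊓ h b ≤ h (u c) ⊓ h e := by
    rw [← map_inf, ← e1, map_inf]
    exact inf_le_inf_right _ (h1 a)
  have k2 : h a ⊓ d' (h b) ≤ h c ⊓ h (d e) := by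
    rw [← map_inf, ← e2, map_inf]
    exact inf_le_inf_left _ (h2 b)
  exact ⟨le_inf ((hpar' _ _).1.trans (hu' (k2.trans inf_le_left))) (k1.trans inf_le_right),
    le_inf (k2.trans inf_le_left) ((hpar' _ _).2.trans (hd' (k1.trans inf_le_right)))⟩

/-- A frame homomorphism between conic frames is a conic morphism iff it
preserves the generating relation `∼`. -/
theorem conic_morphism_iff_preserves_sim {L M : Type*} [Order.Frame L] [Order.Frame M]
    (u d : L → L) (u' d' : M → M)
    (hu : PreservesJoins u) (hd : PreservesJoins d) (hpar : IsParallel u d)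
    (hu' : PreservesJoins u') (hd' : PreservesJoins d') (hpar' : IsParallel u' d')
    (h : FrameHom L M) :
    ((∀ x : L, u' (h x) ≤ h (u x)) ∧ (∀ x : L, d' (h x) ≤ h (d x))) ↔
    (∀ a b c e : L, u a ⊓ b = u c ⊓ e → a ⊓ d b = c ⊓ d e →
      (u' (h a) ⊓ h b = u' (h c) ⊓ h e ∧ h a ⊓ d' (h b) = h c ⊓ d' (h e))) := by
  have mu := hu.mono'
  have md := hd.mono'
  constructor
  · rintro ⟨h1, h2⟩ a b c e e1 e2
    have p := conic_aux u d u' d' hu'.mono' hd'.mono' hpar' h h1 h2 a b c e e1 e2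
    have q := conic_aux u d u' d' hu'.mono' hd'.mono' hpar' h h1 h2 c e a b e1.symm e2.symm
    exact ⟨le_antisymm p.1 q.1, le_antisymm p.2 q.2⟩
  · intro H
    constructor
    · intro x
      have k := (hpar x ⊤).2
      rw [inf_top_eq] at k
      have := (H x ⊤ x (u x) (by simp)
        (le_antisymm (le_inf inf_le_left k) (inf_le_inf_left _ (md le_top)))).1
      rw [map_top, inf_top_eq] at this
      rw [this]
      exact inf_le_right
    · intro x
      have k := (hpar ⊤ x).1
      rw [top_inf_eq] at k
      have := (H ⊤ x (d x) x
        (le_antisymm (le_inf k inf_le_right) (inf_le_inf_right _ (mu le_top))) (by simp)).2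
      rw [map_top, top_inf_eq] at this
      rw [this]
      exact inf_le_left
end

section
/- Let L, M be frames and s, t : L → M open frame homomorphisms, with left adjoints s_! ⊣ s and t_! ⊣ t satisfying Frobenius reciprocity. Write Up = t_! ∘ s and Down = s_! ∘ t. Then for all A, B, C, D ∈ L: s(A) ⊓ t(B) = s(C) ⊓ t(D) if and only if Up(A) ⊓ B = Up(C) ⊓ D and A ⊓ Down(B) = C ⊓ Down(D). -/
/-- For a localic relation with open source and target maps (abstracted as open
frame homomorphisms `s, t`), two rectangles restrict to the same open of the
relation iff they have the same reduced cones. -/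
theorem rectangle_eq_iff_sim {L M : Type*} [Order.Frame L] [Order.Frame M]
    (s t : FrameHom L M) (s₁ t₁ : M → L)
    (hs : GaloisConnection s₁ ⇑s) (ht : GaloisConnection t₁ ⇑t)
    (hsF : ∀ (b : M) (a : L), s₁ (b ⊓ s a) = s₁ b ⊓ a)
    (htF : ∀ (b : M) (a : L), t₁ (b ⊓ t a) = t₁ b ⊓ a) :
    ∀ A B C D : L,
      s A ⊓ t B = s C ⊓ t D ↔
        (t₁ (s A) ⊓ B = t₁ (s C) ⊓ D ∧ A ⊓ s₁ (t B) = C ⊓ s₁ (t D)) := by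
  have key : ∀ A B C D : L, t₁ (s A) ⊓ B = t₁ (s C) ⊓ D →
      A ⊓ s₁ (t B) = C ⊓ s₁ (t D) → s A ⊓ t B ≤ s C ⊓ t D := by
    intro A B C D h1 h2
    refine le_inf ?_ ?_
    · rw [← hs _ _, inf_comm, hsF, inf_comm, h2]
      exact inf_le_left
    · rw [← ht _ _, htF, h1]
      exact inf_le_right
  intro A B C D
  constructor
  · intro h
    refine ⟨?_, ?_⟩
    · rw [← htF, ← htF, h]
    · rw [inf_comm A, inf_comm C, ← hsF, ← hsF, inf_comm (t B), inf_comm (t D), h]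
  · rintro ⟨h1, h2⟩
    exact le_antisymm (key A B C D h1 h2) (key C D A B h1.symm h2.symm)
end

section
/- Let L, M, N be frames, g : L → M a frame homomorphism, and e : M → N an injective frame homomorphism, and suppose the composite f := e ∘ g : L → N is open, with left adjoint f_! : N → L satisfying the Galois connection f_! ⊣ f and Frobenius reciprocity f_!(n ⊓ f(l)) = f_!(n) ⊓ l. Then g is open with left adjoint f_! ∘ e: there is a Galois connection (f_! ∘ e) ⊣ g and Frobenius reciprocity (f_! ∘ e)(m ⊓ g(l)) = (f_! ∘ e)(m) ⊓ l holds for all m ∈ M, l ∈ L. (Localic reading: if g ∘ e' is open and e' is an epimorphism of locales, then g is open with g_! = f_! ∘ e'⁻¹.) -/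
/-- Openness descends along epimorphisms: if `e` is an injective frame
homomorphism and the composite `e ∘ g` is open, then `g` is open with left
adjoint `f₁ ∘ e`. -/
theorem open_descends_along_epi {L M N : Type*} [Order.Frame L] [Order.Frame M]
    [Order.Frame N] (g : FrameHom L M) (e : FrameHom M N)
    (he : Function.Injective e) (f₁ : N → L)
    (hgc : GaloisConnection f₁ (⇑e ∘ ⇑g))
    (hF : ∀ (n : N) (l : L), f₁ (n ⊓ e (g l)) = f₁ n ⊓ l) :
    GaloisConnection (f₁ ∘ ⇑e) ⇑g ∧
      ∀ (m : M) (l : L), (f₁ ∘ ⇑e) (m ⊓ g l) = (f₁ ∘ ⇑e) m ⊓ l := by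
  refine ⟨fun m l => ?_, fun m l => ?_⟩
  · have h : f₁ (e m) ≤ l ↔ e m ≤ e (g l) := hgc (e m) l
    refine h.trans ⟨fun h' => ?_, fun h' => OrderHomClass.mono e h'⟩
    have h2 : e (m ⊓ g l) = e m := by
      rw [map_inf]
      exact inf_eq_left.mpr h'
    exact inf_eq_left.mp (he h2)
  · simp only [Function.comp_apply, map_inf, hF]
end

section
/- Let L be a frame and u, d : L → L monotone functions, and define the Egli–Milner relation x ≼ y iff x ≤ d(y) and y ≤ u(x). Then: (a) for any family with x_i ≼ y_i for all i, one has ⨆_i x_i ≼ ⨆_i y_i; and (b) ≼ is reflexive and transitive (a preorder) if and only if u and d are both inflationary and idempotent. -/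
/-- For monotone cones `u, d` on a frame, the Egli–Milner relation
`x ≼ y ↔ x ≤ d y ∧ y ≤ u x` satisfies the join axiom, and it is a preorder iff
`u` and `d` are inflationary and idempotent. -/
theorem egliMilner_join_and_preorder {L : Type*} [Order.Frame L] (u d : L → L)
    (hum : Monotone u) (hdm : Monotone d) :
    (∀ S : Set (L × L), (∀ p ∈ S, p.1 ≤ d p.2 ∧ p.2 ≤ u p.1) →
      sSup (Prod.fst '' S) ≤ d (sSup (Prod.snd '' S)) ∧
      sSup (Prod.snd '' S) ≤ u (sSup (Prod.fst '' S))) ∧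
    ((Reflexive (fun x y : L => x ≤ d y ∧ y ≤ u x) ∧
        Transitive (fun x y : L => x ≤ d y ∧ y ≤ u x)) ↔
      ((∀ x, x ≤ u x) ∧ (∀ x, x ≤ d x) ∧
        (∀ x, u (u x) = u x) ∧ (∀ x, d (d x) = d x))) := by
  refine ⟨fun S hS => ⟨?_, ?_⟩, ?_, ?_⟩
  · apply sSup_le
    rintro _ ⟨p, hp, rfl⟩
    exact (hS p hp).1.trans (hdm (le_sSup ⟨p, hp, rfl⟩))
  · apply sSup_le
    rintro _ ⟨p, hp, rfl⟩
    exact (hS p hp).2.trans (hum (le_sSup ⟨p, hp, rfl⟩))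
  · rintro ⟨hr, ht⟩
    have hu : ∀ x, x ≤ u x := fun x => (hr x).2
    have hd : ∀ x, x ≤ d x := fun x => (hr x).1
    have h1 : ∀ x, x ≤ d (u x) ∧ u x ≤ u x := fun x => ⟨(hu x).trans (hd _), le_rfl⟩
    have h2 : ∀ x, d x ≤ d x ∧ x ≤ u (d x) := fun x => ⟨le_rfl, (hd x).trans (hu _)⟩
    exact ⟨hu, hd, fun x => le_antisymm (ht (h1 x) (h1 (u x))).2 (hu _),
      fun x => le_antisymm (ht (h2 (d x)) (h2 x)).1 (hd _)⟩
  · rintro ⟨hu, hd, huu, hdd⟩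
    refine ⟨fun x => ⟨hd x, hu x⟩, ?_⟩
    rintro x y z ⟨a, b⟩ ⟨a', b'⟩
    exact ⟨(a.trans (hdm a')).trans (hdd z).le, (b'.trans (hum b)).trans (huu x).le⟩
end
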